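/- arXiv:2605.08966 — 6 statements merged into one kernel-verified Lean document; each statement's English description precedes it below -/
import Mathlib

section
/- Let 0 < δ ≤ α < β ≤ 1 and let t ≥ 1 be real. Suppose C ≥ 0 satisfies |Γ'(γ)/Γ(γ)| ≤ C for every γ ∈ [δ,1]. Then |k_β(t) − k_α(t)| ≤ (β − α) · (t^{β−1}/Γ(β)) · (|log t| + C). -/
/-!
Logarithmic differentiation in the exponent gives `∂k_γ(t)/∂γ = k_γ(t) · (log t - ψ(γ))`, where
`ψ = Γ'/Γ`. For `t ≥ 1` the numerator `t^(γ-1)` increases in `γ`, and `Γ` decreases on `(0, 1]`, so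
`k_γ(t) ≤ k_β(t)` for `γ ≤ β ≤ 1`. Hence the derivative is at most `k_β(t) · (|log t| + C)` in
absolute value on `[α, β]`, and the mean value inequality concludes.
-/

open Real

/-- The continuous power-law kernel `k_γ(t) = t^(γ-1) / Γ(γ)`. -/
noncomputable def powerKernel (γ t : ℝ) : ℝ := t ^ (γ - 1) / Real.Gamma γ

theorem hasDerivAt_powerKernel {γ t : ℝ} (hγ : 0 < γ) (ht : 0 < t) :
    HasDerivAt (fun x => powerKernel x t)
      (powerKernel γ t * (Real.log t - deriv Real.Gamma γ / Real.Gamma γ)) γ := by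
  have hG : Real.Gamma γ ≠ 0 := (Real.Gamma_pos_of_pos hγ).ne'
  have h1 : HasDerivAt Real.Gamma (deriv Real.Gamma γ) γ :=
    (Real.differentiableAt_Gamma fun m h => by
      have : (0 : ℝ) ≤ m := m.cast_nonneg
      linarith).hasDerivAt
  have h2 : HasDerivAt (fun x : ℝ => t ^ (x - 1)) (Real.log t * 1 * t ^ (γ - 1)) γ :=
    ((hasDerivAt_id γ).sub_const 1).const_rpow ht
  refine (h2.div h1 hG).congr_deriv ?_
  unfold powerKernel
  field_simp

/-- For fixed `t ≥ 1`, the kernel is nondecreasing in the exponent `γ ∈ (0, 1]`. -/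
theorem powerKernel_le {γ β t : ℝ} (hγ : 0 < γ) (hγβ : γ ≤ β) (hβ : β ≤ 1) (ht : 1 ≤ t) :
    powerKernel γ t ≤ powerKernel β t := by
  have hβ0 : 0 < β := hγ.trans_le hγβ
  have hΓ : Real.Gamma β ≤ Real.Gamma γ :=
    Real.Gamma_strictAntiOn_Ioc.antitoneOn ⟨hγ, hγβ.trans hβ⟩ ⟨hβ0, hβ⟩ hγβ
  exact div_le_div₀ (by positivity)
    (Real.rpow_le_rpow_of_exponent_le ht (by linarith)) (Real.Gamma_pos_of_pos hβ0) hΓ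

/-- Quantisation bound: for `0 < δ ≤ α < β ≤ 1`, `t ≥ 1`, and a uniform bound `C` on
the digamma function on `[δ,1]`, we have
`|k_β(t) − k_α(t)| ≤ (β − α) · (t^(β−1)/Γ(β)) · (|log t| + C)`. -/
theorem powerKernel_quantisation_bound
    (δ α β t C : ℝ) (hδ : 0 < δ) (hδα : δ ≤ α) (hαβ : α < β) (hβ : β ≤ 1)
    (ht : 1 ≤ t) (hC : 0 ≤ C)
    (hψ : ∀ γ ∈ Set.Icc δ 1, |deriv Real.Gamma γ / Real.Gamma γ| ≤ C) :
    |powerKernel β t - powerKernel α t| ≤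
      (β - α) * (t ^ (β - 1) / Real.Gamma β) * (|Real.log t| + C) := by
  have ht0 : 0 < t := by linarith
  have hbound : ∀ γ ∈ Set.Icc α β,
      ‖powerKernel γ t * (Real.log t - deriv Real.Gamma γ / Real.Gamma γ)‖ ≤
        powerKernel β t * (|Real.log t| + C) := by
    intro γ ⟨h1, h2⟩
    have hγ : 0 < γ := by linarith
    have hk : 0 ≤ powerKernel γ t :=
      div_nonneg (by positivity) (Real.Gamma_pos_of_pos hγ).le
    have hle := powerKernel_le hγ h2 hβ ht
    rw [norm_mul, Real.norm_eq_abs, Real.norm_eq_abs, abs_of_nonneg hk]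
    refine mul_le_mul hle ?_ (abs_nonneg _) (hk.trans hle)
    exact (abs_sub _ _).trans (by gcongr; exact hψ γ ⟨by linarith, by linarith⟩)
  have key := (convex_Icc α β).norm_image_sub_le_of_norm_hasDerivWithin_le
    (fun γ hγ => (hasDerivAt_powerKernel (by linarith [hγ.1]) ht0).hasDerivWithinAt) hbound
    (Set.left_mem_Icc.2 hαβ.le) (Set.right_mem_Icc.2 hαβ.le)
  rw [Real.norm_eq_abs, Real.norm_eq_abs, abs_of_pos (sub_pos.2 hαβ)] at key
  refine key.trans_eq ?_
  unfold powerKernel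
  ring
end

section
/- Let α ∈ (0,1), let M be a positive natural number, and for m = 1,…,M let π_m ≥ 0 and λ_m > 0. Set f(t) = Σ_{m=1}^M π_m e^{−λ_m t}, g_α(t) = t^{α−1}, C_f = Σ_{m=1}^M π_m, and R = Σ_{m=1}^M Σ_{m'=1}^M π_m π_{m'}/(λ_m + λ_{m'}). Suppose Λ > 0 satisfies Λ ≤ λ_m for all m. Then for every real T ≥ 1: ∫_1^T (f(t) − g_α(t))² dt ≥ ∫_1^T t^{2α−2} dt − 2·C_f·Γ(α)·Λ^{−α} − C_f²·R, where Γ is the real Gamma function. -/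
/-!
Expanding the square and discarding `f ^ 2 ≥ 0` gives `(f - g) ^ 2 ≥ g ^ 2 - 2 * f * g` for
`g t = t ^ (α - 1)`. Since every rate is at least `Λ`, `f t ≤ C_f * exp (-Λ t)` for `t ≥ 0`, so the
cross term integrates to at most `C_f` times the Gamma integral
`∫ t in Ioi 0, t ^ (α - 1) * exp (-Λ t) = Γ(α) * Λ ^ (-α)` (`integral_rpow_mul_exp_le`).
The term `C_f ^ 2 * R` is nonnegative, so subtracting it only weakens the bound.
-/

open Real Finset

/-- The truncated Gamma integral is at most the full one, its integrand being nonnegative. -/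
lemma integral_rpow_mul_exp_le {α Λ T : ℝ} (hα : 0 < α) (hΛ : 0 < Λ) (hT : 1 ≤ T) :
    ∫ t in (1:ℝ)..T, t ^ (α - 1) * Real.exp (-(Λ * t)) ≤ Real.Gamma α * Λ ^ (-α) := by
  have hI : MeasureTheory.IntegrableOn
      (fun t : ℝ => t ^ (α - 1) * Real.exp (-(Λ * t))) (Set.Ioi 0) := by
    have h := integrableOn_rpow_mul_exp_neg_mul_rpow (p := 1) (s := α - 1) (b := Λ)
      (by linarith) one_pos hΛ
    simpa only [Real.rpow_one, neg_mul] using h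
  have hG := Real.integral_rpow_mul_exp_neg_mul_Ioi hα hΛ
  have hpow : (1 / Λ) ^ α = Λ ^ (-α) := by
    rw [one_div, Real.inv_rpow hΛ.le, Real.rpow_neg hΛ.le]
  rw [hpow, mul_comm] at hG
  rw [← hG, intervalIntegral.integral_of_le hT]
  refine MeasureTheory.setIntegral_mono_set hI ?_ ?_
  · filter_upwards [MeasureTheory.ae_restrict_mem measurableSet_Ioi] with t ht
    exact mul_nonneg (Real.rpow_nonneg (le_of_lt ht) _) (Real.exp_pos _).le
  · exact Filter.Eventually.of_forall fun t ht => lt_trans one_pos ht.1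

/-- Scaling lower bound on exponential-mixture approximation error of the power law
`g_α(t) = t^(α−1)` on `[1,T]`: with weights `p m ≥ 0`, rates `lam m ≥ Λ > 0`,
`C_f = Σ p_m` and `R = Σ_m Σ_m' p_m p_m' / (λ_m + λ_m')`,
`∫_1^T (f − g_α)² dt ≥ ∫_1^T t^(2α−2) dt − 2 C_f Γ(α) Λ^(−α) − C_f² R`. -/
theorem exp_mixture_L2_lower_bound
    (α : ℝ) (hα : α ∈ Set.Ioo (0 : ℝ) 1) (M : ℕ) (hM : 0 < M)
    (p : Fin M → ℝ) (lam : Fin M → ℝ)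
    (hp : ∀ m, 0 ≤ p m) (hlam : ∀ m, 0 < lam m)
    (Λ : ℝ) (hΛ : 0 < Λ) (hΛle : ∀ m, Λ ≤ lam m)
    (T : ℝ) (hT : 1 ≤ T) :
    (∫ t in (1:ℝ)..T, t ^ (2 * α - 2))
        - 2 * (∑ m, p m) * Real.Gamma α * Λ ^ (-α)
        - (∑ m, p m) ^ 2 * (∑ m, ∑ m', p m * p m' / (lam m + lam m'))
      ≤ ∫ t in (1:ℝ)..T,
          ((∑ m, p m * Real.exp (-(lam m) * t)) - t ^ (α - 1)) ^ 2 := by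
  have hC : 0 ≤ ∑ m, p m := sum_nonneg fun m _ => hp m
  have hR : 0 ≤ ∑ m, ∑ m', p m * p m' / (lam m + lam m') :=
    sum_nonneg fun m _ => sum_nonneg fun m' _ =>
      div_nonneg (mul_nonneg (hp m) (hp m')) (add_pos (hlam m) (hlam m')).le
  have hpos : ∀ t ∈ Set.uIcc 1 T, (0 : ℝ) < t := fun t ht => by
    rw [Set.uIcc_of_le hT] at ht
    linarith [ht.1]
  have hrpow : ∀ r : ℝ, ContinuousOn (fun t : ℝ => t ^ r) (Set.uIcc 1 T) := fun r =>
    continuousOn_id.rpow_const fun t ht => Or.inl (hpos t ht).ne'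
  have hi1 : IntervalIntegrable (fun t : ℝ => t ^ (2 * α - 2)) MeasureTheory.volume 1 T :=
    (hrpow _).intervalIntegrable
  have hi2 : IntervalIntegrable
      (fun t : ℝ => 2 * (∑ m, p m) * (t ^ (α - 1) * Real.exp (-(Λ * t))))
      MeasureTheory.volume 1 T :=
    (continuousOn_const.mul ((hrpow _).mul (by fun_prop))).intervalIntegrable
  have hi3 : IntervalIntegrable
      (fun t : ℝ => ((∑ m, p m * Real.exp (-(lam m) * t)) - t ^ (α - 1)) ^ 2)
      MeasureTheory.volume 1 T :=
    ((ContinuousOn.sub (by fun_prop) (hrpow _)).pow 2).intervalIntegrable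
  have hmono : ∫ t in (1:ℝ)..T,
        (t ^ (2 * α - 2) - 2 * (∑ m, p m) * (t ^ (α - 1) * Real.exp (-(Λ * t))))
      ≤ ∫ t in (1:ℝ)..T, ((∑ m, p m * Real.exp (-(lam m) * t)) - t ^ (α - 1)) ^ 2 := by
    refine intervalIntegral.integral_mono_on hT (hi1.sub hi2) hi3 fun t ht => ?_
    have ht0 : 0 < t := by linarith [ht.1]
    have hg : 0 ≤ t ^ (α - 1) := Real.rpow_nonneg ht0.le _
    have hsq : t ^ (2 * α - 2) = (t ^ (α - 1)) ^ 2 := by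
      rw [← Real.rpow_mul_natCast ht0.le]
      congr 1
      push_cast
      ring
    have hf : ∑ m, p m * Real.exp (-(lam m) * t) ≤ (∑ m, p m) * Real.exp (-(Λ * t)) := by
      rw [sum_mul]
      refine sum_le_sum fun m _ => mul_le_mul_of_nonneg_left (Real.exp_le_exp.2 ?_) (hp m)
      nlinarith [hΛle m]
    rw [hsq]
    nlinarith [mul_le_mul_of_nonneg_right hf hg,
      sq_nonneg (∑ m, p m * Real.exp (-(lam m) * t))]
  rw [intervalIntegral.integral_sub hi1 hi2, intervalIntegral.integral_const_mul] at hmono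
  have hΓ := mul_le_mul_of_nonneg_left (integral_rpow_mul_exp_le hα.1 hΛ hT)
    (mul_nonneg zero_le_two hC)
  have hCR := mul_nonneg (sq_nonneg (∑ m, p m)) hR
  linarith
end

section
/- Let F : ℝ → ℝ be twice continuously differentiable, and let a ∈ ℝ satisfy F'(a) = 0 and F''(a) > 0. Then there exists ε > 0 such that for all x with |x − a| < ε, (F'(x))² ≥ F''(a) · (F(x) − F(a)); that is, the Polyak–Łojasiewicz condition with constant 2μ = F''(a) and minimum value F(a) holds in a neighbourhood of a. -/
open Real

/-!
Write `c = F''(a)` and `G(x) = F'(x)² - c (F(x) - F(a))`. Then `G(a) = 0` and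
`G' = F' (2 F'' - c)`. By continuity `F'' > c / 2 > 0` on some interval around `a`; there the
second factor is positive and `F'` is increasing with `F'(a) = 0`, so `G'` is nonpositive to the
left of `a` and nonnegative to the right. Hence `G` attains its minimum over the interval at `a`,
and `G ≥ 0`.
-/

/-- Local Polyak–Łojasiewicz condition near a strict local minimum: if `F` is `C²`,
`F'(a) = 0` and `F''(a) > 0`, then in a neighbourhood of `a`,
`(F'(x))² ≥ F''(a) · (F(x) − F(a))`. -/
theorem pl_condition_near_strict_local_min
    (F : ℝ → ℝ) (hF : ContDiff ℝ 2 F) (a : ℝ)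
    (ha : deriv F a = 0) (ha2 : 0 < deriv (deriv F) a) :
    ∃ ε > 0, ∀ x : ℝ, |x - a| < ε →
      deriv (deriv F) a * (F x - F a) ≤ (deriv F x) ^ 2 := by
  have hF1 : ContDiff ℝ 1 (deriv F) :=
    ((contDiff_succ_iff_deriv (n := 1)).1 (by simpa [one_add_one_eq_two] using hF)).2.2
  have hd : Differentiable ℝ F := hF.differentiable (by norm_num)
  have hd1 : Differentiable ℝ (deriv F) := hF1.differentiable (by norm_num)
  have hc : Continuous (deriv (deriv F)) := hF1.continuous_deriv le_rfl
  set c := deriv (deriv F) a with hcdef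
  obtain ⟨ε, hε, hball⟩ := Metric.eventually_nhds_iff.1
    (hc.continuousAt.eventually (lt_mem_nhds (show c / 2 < deriv (deriv F) a by linarith)))
  refine ⟨ε, hε, fun x hx => ?_⟩
  have hpos : ∀ y, a - ε < y → y < a + ε → c / 2 < deriv (deriv F) y := fun y h1 h2 =>
    hball (by rw [Real.dist_eq, abs_lt]; constructor <;> linarith)
  have hmono : MonotoneOn (deriv F) (Set.Ioo (a - ε) (a + ε)) := by
    refine monotoneOn_of_deriv_nonneg (convex_Ioo _ _) hd1.continuous.continuousOn
      hd1.differentiableOn fun y hy => ?_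
    rw [interior_Ioo] at hy
    linarith [hpos y hy.1 hy.2]
  have hG : ∀ y, HasDerivAt (fun y => deriv F y ^ 2 - c * (F y - F a))
      (deriv F y * (2 * deriv (deriv F) y - c)) y := fun y => by
    have h := ((hd1 y).hasDerivAt.pow 2).sub (((hd y).hasDerivAt.sub_const (F a)).const_mul c)
    exact h.congr_deriv (by push_cast; ring)
  have hGd : Differentiable ℝ (fun y => deriv F y ^ 2 - c * (F y - F a)) :=
    fun y => (hG y).differentiableAt
  have hmem : a ∈ Set.Ioo (a - ε) (a + ε) := ⟨by linarith, by linarith⟩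
  obtain ⟨hx1, hx2⟩ := abs_lt.1 hx
  rcases le_total a x with hax | hxa
  · have hm : MonotoneOn (fun y => deriv F y ^ 2 - c * (F y - F a)) (Set.Icc a x) := by
      refine monotoneOn_of_deriv_nonneg (convex_Icc _ _) hGd.continuous.continuousOn
        hGd.differentiableOn fun y hy => ?_
      rw [interior_Icc] at hy
      have h1 : a - ε < y := by linarith [hy.1]
      have h2 : y < a + ε := by linarith [hy.2]
      have h3 := hmono hmem ⟨h1, h2⟩ hy.1.le
      rw [(hG y).deriv]
      exact mul_nonneg (by linarith) (by linarith [hpos y h1 h2])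
    have h := hm (Set.left_mem_Icc.2 hax) (Set.right_mem_Icc.2 hax) hax
    simp only [ha, sub_self] at h
    linarith
  · have hm : AntitoneOn (fun y => deriv F y ^ 2 - c * (F y - F a)) (Set.Icc x a) := by
      refine antitoneOn_of_deriv_nonpos (convex_Icc _ _) hGd.continuous.continuousOn
        hGd.differentiableOn fun y hy => ?_
      rw [interior_Icc] at hy
      have h1 : a - ε < y := by linarith [hy.1]
      have h2 : y < a + ε := by linarith [hy.2]
      have h3 := hmono ⟨h1, h2⟩ hmem hy.2.le
      rw [(hG y).deriv]
      exact mul_nonpos_of_nonpos_of_nonneg (by linarith) (by linarith [hpos y h1 h2])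
    have h := hm (Set.left_mem_Icc.2 hxa) (Set.right_mem_Icc.2 hxa) hxa
    simp only [ha, sub_self] at h
    linarith
end

section
/- Let E be a real normed vector space, let α ∈ (0,1), let V ≥ 0, and let v : ℕ → E satisfy ‖v_i‖ ≤ V for all i. Then for every natural number t ≥ 1, the bank state M_t = Σ_{i=1}^t w_{t−i}^{(α)} v_i satisfies ‖M_t‖ ≤ V · Γ(t+α)/(Γ(α+1)·Γ(t)), where Γ is the real Gamma function. -/
/-!
By the triangle inequality and positivity of the weights, the bank state is bounded by
`V` times the partial sum `w_0 + ⋯ + w_{t-1}`. These partial sums have a closed form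
(`sum_range_glWeight`), the Gamma-function version of the hockey-stick identity
`∑_{j ≤ n} C(j+α-1, j) = C(n+α, n)`, which at `n = t - 1` is exactly the claimed bound.
-/

open Real Finset

/-- The Grünwald–Letnikov weight `w_j^(α) = Γ(j+α)/(Γ(α)·j!)`. -/
noncomputable def glWeight (α : ℝ) (j : ℕ) : ℝ :=
  Real.Gamma (j + α) / (Real.Gamma α * (Nat.factorial j))

lemma glWeight_nonneg {α : ℝ} (hα : 0 < α) (j : ℕ) : 0 ≤ glWeight α j := by
  have h1 : 0 < Real.Gamma (j + α) := Real.Gamma_pos_of_pos (by positivity)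
  have h2 : 0 < Real.Gamma α := Real.Gamma_pos_of_pos hα
  unfold glWeight
  positivity

/-- Hockey-stick identity for the Grünwald–Letnikov weights. -/
lemma sum_range_glWeight {α : ℝ} (hα : 0 < α) (n : ℕ) :
    ∑ j ∈ Finset.range (n + 1), glWeight α j =
      Real.Gamma (n + 1 + α) / (Real.Gamma (α + 1) * (Nat.factorial n)) := by
  have h2 : Real.Gamma α ≠ 0 := (Real.Gamma_pos_of_pos hα).ne'
  have h3 : Real.Gamma (α + 1) = α * Real.Gamma α := Real.Gamma_add_one hα.ne'
  induction n with
  | zero =>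
    have h4 : Real.Gamma (1 + α) = α * Real.Gamma α := by rw [add_comm, h3]
    simp [glWeight, h3, h4, h2, hα.ne']
  | succ n ih =>
    have h5 : Real.Gamma (n + 1 + 1 + α) = (n + 1 + α) * Real.Gamma (n + 1 + α) := by
      rw [← Real.Gamma_add_one (by positivity)]
      ring_nf
    have h6 : (Nat.factorial n : ℝ) ≠ 0 := by positivity
    rw [Finset.sum_range_succ, ih, glWeight, h3, Nat.factorial_succ]
    push_cast
    rw [h5]
    field_simp

/-- Bank-state growth: if `‖v_i‖ ≤ V` for all `i`, then the bank state
`M_t = Σ_{i=1}^t w_{t−i}^(α) v_i` satisfies `‖M_t‖ ≤ V · Γ(t+α)/(Γ(α+1)·Γ(t))`. -/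
theorem bank_state_norm_le
    (E : Type*) [NormedAddCommGroup E] [NormedSpace ℝ E]
    (α : ℝ) (hα : α ∈ Set.Ioo (0 : ℝ) 1) (V : ℝ) (hV : 0 ≤ V)
    (v : ℕ → E) (hv : ∀ i, ‖v i‖ ≤ V) (t : ℕ) (ht : 1 ≤ t) :
    ‖∑ i ∈ Finset.Icc 1 t, glWeight α (t - i) • v i‖
      ≤ V * (Real.Gamma (t + α) / (Real.Gamma (α + 1) * Real.Gamma t)) := by
  obtain ⟨n, rfl⟩ : ∃ n, t = n + 1 := ⟨t - 1, by omega⟩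
  have hsum : ∑ i ∈ Finset.Icc 1 (n + 1), glWeight α (n + 1 - i) =
      ∑ j ∈ Finset.range (n + 1), glWeight α j := by
    refine Finset.sum_nbij' (fun i => n + 1 - i) (fun j => n + 1 - j) ?_ ?_ ?_ ?_ ?_ <;>
      intro i hi <;> simp only [Finset.mem_Icc, Finset.mem_range] at * <;> omega
  calc ‖∑ i ∈ Finset.Icc 1 (n + 1), glWeight α (n + 1 - i) • v i‖
      ≤ ∑ i ∈ Finset.Icc 1 (n + 1), V * glWeight α (n + 1 - i) := by
        refine norm_sum_le_of_le _ fun i _ => ?_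
        have hw := glWeight_nonneg hα.1 (n + 1 - i)
        rw [norm_smul, Real.norm_of_nonneg hw, mul_comm]
        exact mul_le_mul_of_nonneg_right (hv i) hw
    _ = V * (Real.Gamma ((n + 1 : ℕ) + α) /
          (Real.Gamma (α + 1) * Real.Gamma ((n + 1 : ℕ) : ℝ))) := by
        rw [← Finset.mul_sum, hsum, sum_range_glWeight hα.1]
        push_cast
        rw [Real.Gamma_nat_eq_factorial]
end

section
/- Let α ∈ (0,1). Then the partial sums of the Grünwald–Letnikov weights satisfy (Σ_{j=0}^{n−1} w_j^{(α)}) / n^α → 1/Γ(α+1) as the natural number n → ∞, where Γ is the real Gamma function; in particular the bank-state norm grows sublinearly, as O(n^α). -/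
/-!
The partial sums have a closed form, the hockey-stick identity
`∑_{j<n} w_j = n Γ(n+α) / (Γ(α+1) n!)` (`sum_glWeight`).
Since `∏_{j≤n} (α+j) = Γ(n+1+α) / Γ(α)`, dividing by `n^α` gives
`n / (n+α) * (α * GammaSeq α n)⁻¹`, where `GammaSeq α n = n^α n! / ∏_{j≤n} (α+j)` is Euler's sequence,
and Euler's limit formula `Real.GammaSeq_tendsto_Gamma` yields the limit `1 / (α Γ(α))`.
-/

open Real Finset Filter

theorem sum_glWeight {α : ℝ} (hα : 0 < α) (n : ℕ) :
    ∑ j ∈ Finset.range n, glWeight α j =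
      n * Real.Gamma (n + α) / (Real.Gamma (α + 1) * (Nat.factorial n)) := by
  have hΓ : Real.Gamma α ≠ 0 := (Real.Gamma_pos_of_pos hα).ne'
  induction n with
  | zero => simp
  | succ n ih =>
    have hn : (n : ℝ) + α ≠ 0 := by positivity
    have hf : (Nat.factorial n : ℝ) ≠ 0 := by positivity
    have hs : ((n + 1 : ℕ) : ℝ) + α = (n + α) + 1 := by push_cast; ring
    rw [Finset.sum_range_succ, ih, glWeight, hs, Real.Gamma_add_one hn,
      Real.Gamma_add_one hα.ne', Nat.factorial_succ]
    push_cast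
    field_simp

theorem prod_add_eq_Gamma_div {α : ℝ} (hα : 0 < α) (n : ℕ) :
    ∏ j ∈ Finset.range n, (α + j) = Real.Gamma (n + α) / Real.Gamma α := by
  have hΓ : Real.Gamma α ≠ 0 := (Real.Gamma_pos_of_pos hα).ne'
  induction n with
  | zero => simp [hΓ]
  | succ n ih =>
    have hn : (n : ℝ) + α ≠ 0 := by positivity
    have hs : ((n + 1 : ℕ) : ℝ) + α = (n + α) + 1 := by push_cast; ring
    rw [Finset.prod_range_succ, ih, hs, Real.Gamma_add_one hn]
    ring

/-- Sublinear growth of the partial sums of the GL weights: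
`(Σ_{j<n} w_j^(α)) / n^α → 1/Γ(α+1)` as `n → ∞`. -/
theorem glWeight_partial_sum_asymptotics (α : ℝ) (hα : α ∈ Set.Ioo (0 : ℝ) 1) :
    Filter.Tendsto
      (fun n : ℕ => (∑ j ∈ Finset.range n, glWeight α j) / (n : ℝ) ^ α)
      atTop (nhds (1 / Real.Gamma (α + 1))) := by
  have h0 : 0 < α := hα.1
  have hΓ : 0 < Real.Gamma α := Real.Gamma_pos_of_pos h0
  have hlim : Tendsto (fun n : ℕ => (n : ℝ) / (n + α) * (α * Real.GammaSeq α n)⁻¹)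
      atTop (nhds (1 * (α * Real.Gamma α)⁻¹)) :=
    (tendsto_natCast_div_add_atTop α).mul
      (((Real.GammaSeq_tendsto_Gamma α).const_mul α).inv₀ (by positivity))
  rw [Real.Gamma_add_one h0.ne', one_div, ← one_mul (α * Real.Gamma α)⁻¹]
  refine hlim.congr' ?_
  filter_upwards [eventually_gt_atTop 0] with n hn
  have hn' : (0 : ℝ) < n := by exact_mod_cast hn
  have hs : ((n + 1 : ℕ) : ℝ) + α = (n + α) + 1 := by push_cast; ring
  have hna : (n : ℝ) + α ≠ 0 := by positivity
  have hp : (n : ℝ) ^ α ≠ 0 := by positivity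
  have hf : (Nat.factorial n : ℝ) ≠ 0 := by positivity
  have hG : Real.Gamma (n + α) ≠ 0 := (Real.Gamma_pos_of_pos (by positivity)).ne'
  rw [sum_glWeight h0, Real.GammaSeq, prod_add_eq_Gamma_div h0, hs, Real.Gamma_add_one hna,
    Real.Gamma_add_one h0.ne']
  field_simp
end

section
/- Let α ∈ (0,1) be real. Then for every natural number j, the Grünwald–Letnikov weight admits the Laplace-type integral representation w_j^{(α)} = ∫_0^∞ e^{−λ j} ρ_α(λ) dλ, where ρ_α(λ) = e^{−αλ}·(1−e^{−λ})^{−α} / (Γ(α)·Γ(1−α)). -/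
/-!
The substitution `x = e^(-λ)` maps `(0,∞)` bijectively onto `(0,1)` and turns the integral of
`e^(-(j+α)λ) (1 - e^(-λ))^(-α)` into `∫₀¹ x^(j+α-1) (1-x)^(-α) dx = B(j+α, 1-α)`. Euler's formula
`B(u,v) = Γ(u)Γ(v)/Γ(u+v)` evaluates this as `Γ(j+α) Γ(1-α) / j!`, since `(j+α) + (1-α) = j+1`.
Dividing by `Γ(α) Γ(1-α)` gives the weight.
-/

open Real

/-- The Laplace density `ρ_α(λ) = e^(−αλ)·(1−e^(−λ))^(−α) / (Γ(α)·Γ(1−α))`. -/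
noncomputable def laplaceDensity (α lam : ℝ) : ℝ :=
  Real.exp (-α * lam) * (1 - Real.exp (-lam)) ^ (-α)
    / (Real.Gamma α * Real.Gamma (1 - α))

open MeasureTheory

lemma exp_neg_image_Ioi_zero :
    (fun x : ℝ => Real.exp (-x)) '' Set.Ioi 0 = Set.Ioo 0 1 := by
  ext y
  constructor
  · rintro ⟨x, hx, rfl⟩
    exact ⟨Real.exp_pos _, by simpa using hx⟩
  · rintro ⟨h0, h1⟩
    exact ⟨-Real.log y, neg_pos.mpr (Real.log_neg h0 h1), by simp [Real.exp_log h0]⟩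

/-- The real Beta integral after the substitution `x = e^(-λ)`. -/
lemma integral_exp_mul_one_sub_exp_rpow (u v : ℝ) (hu : 0 < u) (hv : 0 < v) :
    ∫ x in Set.Ioi (0 : ℝ), Real.exp (-x * u) * (1 - Real.exp (-x)) ^ (v - 1)
      = Real.Gamma u * Real.Gamma v / Real.Gamma (u + v) := by
  have hbeta : ∫ y in Set.Ioo (0 : ℝ) 1, y ^ (u - 1) * (1 - y) ^ (v - 1)
      = Real.Gamma u * Real.Gamma v / Real.Gamma (u + v) := by
    have h := ProbabilityTheory.beta_eq_betaIntegralReal u v hu hv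
    rw [ProbabilityTheory.beta, Complex.betaIntegral,
      intervalIntegral.integral_of_le zero_le_one, integral_Ioc_eq_integral_Ioo] at h
    rw [h, ← RCLike.re_eq_complex_re, ← Complex.ofReal_re (∫ y in _, _), ← integral_complex_ofReal,
      RCLike.re_eq_complex_re]
    congr 1
    refine setIntegral_congr_fun measurableSet_Ioo fun y hy => ?_
    rw [Complex.ofReal_mul, Complex.ofReal_cpow hy.1.le, Complex.ofReal_cpow (sub_nonneg.mpr hy.2.le)]
    push_cast
    rfl
  rw [← hbeta, ← exp_neg_image_Ioi_zero, integral_image_eq_integral_abs_deriv_smul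
    (f' := fun x => -Real.exp (-x)) measurableSet_Ioi
    (fun x _ => by simpa using ((hasDerivAt_neg x).exp).hasDerivWithinAt)
    (fun x _ y _ h => by simpa using h)]
  refine setIntegral_congr_fun measurableSet_Ioi fun x _ => ?_
  simp only [smul_eq_mul, abs_neg, abs_of_pos (Real.exp_pos _)]
  rw [← Real.exp_mul, ← mul_assoc, ← Real.exp_add]
  congr 2
  ring

/-- Laplace-type integral representation of the GL weights: for `α ∈ (0,1)` and
every `j ∈ ℕ`, `w_j^(α) = ∫_0^∞ e^(−λ j) ρ_α(λ) dλ`. -/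
theorem glWeight_laplace_representation (α : ℝ) (hα : α ∈ Set.Ioo (0 : ℝ) 1)
    (j : ℕ) :
    glWeight α j
      = ∫ lam in Set.Ioi (0:ℝ), Real.exp (-lam * j) * laplaceDensity α lam := by
  obtain ⟨h0, h1⟩ := hα
  have hj : (0 : ℝ) < j + α := by positivity
  have hint : ∀ x : ℝ, Real.exp (-x * j) * laplaceDensity α x
      = Real.exp (-x * (j + α)) * (1 - Real.exp (-x)) ^ ((1 - α) - 1)
        / (Real.Gamma α * Real.Gamma (1 - α)) := by
    intro x
    rw [laplaceDensity, ← mul_div_assoc, ← mul_assoc, ← Real.exp_add]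
    ring_nf
  simp_rw [hint]
  rw [integral_div, integral_exp_mul_one_sub_exp_rpow _ _ hj (sub_pos.mpr h1),
    show (j : ℝ) + α + (1 - α) = j + 1 by ring, Real.Gamma_nat_eq_factorial, glWeight]
  have := (Real.Gamma_pos_of_pos h0).ne'
  have := (Real.Gamma_pos_of_pos (sub_pos.mpr h1)).ne'
  field_simp
end
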